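/- Let λ > 0. There exists a constant C = C(λ) > 0 such that for all x, y, t > 0: (a) P_t^λ(x,y) ≤ C · t/(t+|x−y|)² · (min{ min(x,y)/(t+|x−y|), 1 })^λ, and (b) P_t^λ(x,y) ≤ C · t (xy)^λ/(t+|x−y|)^{2(λ+1)}. -/

import Mathlib

open Real MeasureTheory Set Filter

noncomputable section

/-- The modified Bessel function of the first kind `I_ν(z)`. -/
def besselI (ν z : ℝ) : ℝ :=
  ∑' k : ℕ, (z / 2) ^ (2 * (k : ℝ) + ν) / ((Nat.factorial k : ℝ) * Real.Gamma ((k : ℝ) + ν + 1))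

/-- The Bessel heat kernel `W_t^λ(x,y)`. -/
def besselHeatKernel (lam t x y : ℝ) : ℝ :=
  Real.sqrt (x * y) / (2 * t) * besselI (lam - 1 / 2) (x * y / (2 * t)) *
    Real.exp (-(x ^ 2 + y ^ 2) / (4 * t))

/-- The Bessel–Poisson kernel `P_t^λ(x,y)`, obtained by subordination. -/
def besselPoissonKernel (lam t x y : ℝ) : ℝ :=
  t / (2 * Real.sqrt Real.pi) *
    ∫ s in Set.Ioi (0 : ℝ),
      s ^ (-(3 : ℝ) / 2) * Real.exp (-t ^ 2 / (4 * s)) * besselHeatKernel lam s x y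

/-- The Bessel heat semigroup `W_t^λ u (x)`. -/
def heatSemigroup (lam : ℝ) (u : ℝ → ℝ) (t x : ℝ) : ℝ :=
  ∫ y in Set.Ioi (0 : ℝ), besselHeatKernel lam t x y * u y

/-- The Bessel–Poisson semigroup `P_t^λ f (x)`. -/
def poissonSemigroup (lam : ℝ) (f : ℝ → ℝ) (t x : ℝ) : ℝ :=
  ∫ y in Set.Ioi (0 : ℝ), besselPoissonKernel lam t x y * f y

/-- The set of Hölder quotients of `f` on `(0,∞)`. -/
def holderRatioSet (α : ℝ) (f : ℝ → ℝ) : Set ℝ :=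
  {r | ∃ x y : ℝ, 0 < x ∧ 0 < y ∧ x ≠ y ∧ r = |f x - f y| / |x - y| ^ α}

/-- The set of growth quotients `|f x|/x^α` of `f` on `(0,∞)`. -/
def growthRatioSet (α : ℝ) (f : ℝ → ℝ) : Set ℝ :=
  {r | ∃ x : ℝ, 0 < x ∧ r = |f x| / x ^ α}

/-- Membership in the Hölder space `C^α_+` (equal to `Lip_+` when `α = 1`). -/
def MemHolderPlus (α : ℝ) (f : ℝ → ℝ) : Prop :=
  ContinuousOn f (Set.Ioi 0) ∧ BddAbove (holderRatioSet α f) ∧ BddAbove (growthRatioSet α f)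

/-- The `C^α_+` norm. -/
def holderPlusNorm (α : ℝ) (f : ℝ → ℝ) : ℝ :=
  sSup (holderRatioSet α f) + sSup (growthRatioSet α f)

/-- `Γ(-σ)`, written through the functional equation `Γ(-σ) = Γ(2-σ)/((-σ)(1-σ))`. -/
def gammaNeg (σ : ℝ) : ℝ := Real.Gamma (2 - σ) / (-σ * (1 - σ))

/-- The kernel `K_σ^λ(x,y)`. -/
def fracKernelK (lam σ x y : ℝ) : ℝ :=
  1 / (-gammaNeg σ) * ∫ t in Set.Ioi (0 : ℝ), besselHeatKernel lam t x y * t ^ (-1 - σ)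

/-- `W_t^λ 1 (x)`. -/
def heatOne (lam t x : ℝ) : ℝ := ∫ y in Set.Ioi (0 : ℝ), besselHeatKernel lam t x y

/-- The function `B_σ^λ(x)`. -/
def fracFunB (lam σ x : ℝ) : ℝ :=
  1 / gammaNeg σ * ∫ t in Set.Ioi (0 : ℝ), (heatOne lam t x - 1) * t ^ (-1 - σ)

/-- The integer `m` with `m - 1 ≤ β < m`. -/
def fracOrder (β : ℝ) : ℕ := Nat.floor β + 1

/-- The Segovia–Wheeden fractional derivative `∂_t^β F(t)`, a complex number. -/
def fracDeriv (β : ℝ) (F : ℝ → ℝ) (t : ℝ) : ℂ :=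
  Complex.exp (-(Real.pi * ((fracOrder β : ℝ) - β)) * Complex.I) /
      Complex.ofReal (Real.Gamma ((fracOrder β : ℝ) - β)) *
    Complex.ofReal
      (∫ s in Set.Ioi (0 : ℝ),
        iteratedDeriv (fracOrder β) F (t + s) * s ^ ((fracOrder β : ℝ) - β - 1))

/-!
For `0 ≤ μ ≤ λ` one has `√z I_{λ-1/2}(z) e^{-z} ≲ z^μ`. Indeed, by the duplication formula and the
log-convexity of `Γ`, the `k`-th term of `√z I_{λ-1/2}(z)` is at most a constant times
`(z / (2k+1))^λ z^{2k} / (2k)!`; here `(z / (2k+1))^μ ≤ z^μ`, and the remaining power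
`(z / (2k+1))^{λ-μ}` is dominated by a shift of the exponential series, so it costs a constant.
Hence `W_s(x,y) ≲ (xy/s)^μ s^{-1/2} e^{-(x-y)²/(4s)}`, and subordination reduces to a Gamma
integral after `s ↦ 1/s`, giving `P_t(x,y) ≲ (t/D²) (xy/D²)^μ` with `D = t + |x-y|`. The cases
`μ = 0` and `μ = λ` give both estimates, because `max(x,y) ≤ min(x,y) + D`.
-/

section Gamma

lemma Gamma_add_one_mul_rpow_le {s a : ℝ} (hs : 0 < s) (ha : 0 ≤ a) :
    Gamma (s + 1) * s ^ a ≤ Gamma (s + 1 + a) := by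
  rcases ha.eq_or_lt with rfl | ha
  · simp
  have hΓs : 0 < Gamma s := Gamma_pos_of_pos hs
  have hΓs1 : 0 < Gamma (s + 1) := Gamma_pos_of_pos (by positivity)
  have hΓsa : 0 < Gamma (s + 1 + a) := Gamma_pos_of_pos (by positivity)
  have hslope := convexOn_log_Gamma.slope_mono_adjacent (x := s) (y := s + 1) (z := s + 1 + a)
    hs (show 0 < s + 1 + a by positivity) (by linarith) (by linarith)
  have hlog : log (Gamma (s + 1)) - log (Gamma s) = log s := by
    rw [Gamma_add_one hs.ne', log_mul hs.ne' hΓs.ne', add_sub_cancel_right]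
  simp only [Function.comp_apply, add_sub_cancel_left, div_one, hlog, le_div_iff₀ ha] at hslope
  rw [← log_le_log_iff (by positivity) hΓsa, log_mul hΓs1.ne' (by positivity), log_rpow hs]
  linarith

lemma Gamma_mul_rpow_le {s a : ℝ} (hs : 0 < s) (ha : 0 ≤ a) :
    Gamma s * s ^ a ≤ (1 + a / s) * Gamma (s + a) := by
  have h := Gamma_add_one_mul_rpow_le hs ha
  rw [add_right_comm, Gamma_add_one hs.ne', Gamma_add_one (by positivity)] at h
  refine le_of_mul_le_mul_left ?_ hs
  calc s * (Gamma s * s ^ a) = s * Gamma s * s ^ a := by ring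
    _ ≤ (s + a) * Gamma (s + a) := h
    _ = s * ((1 + a / s) * Gamma (s + a)) := by field_simp

lemma factorial_mul_Gamma_add_half (k : ℕ) :
    (k.factorial : ℝ) * Gamma (k + 1 / 2) = √π * (2 * k).factorial / 4 ^ k := by
  have hdup := Gamma_mul_Gamma_add_half ((k : ℝ) + 1 / 2)
  rw [show (k : ℝ) + 1 / 2 + 1 / 2 = k + 1 by ring,
    show 2 * ((k : ℝ) + 1 / 2) = (2 * k : ℕ) + 1 by push_cast; ring,
    Gamma_nat_eq_factorial, Gamma_nat_eq_factorial, sub_add_cancel_right,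
    rpow_neg zero_le_two, rpow_natCast, pow_mul] at hdup
  rw [mul_comm, hdup]
  norm_num
  ring

lemma factorial_two_mul_mul_rpow_le {a : ℝ} (ha : 0 ≤ a) (k : ℕ) :
    √π * (2 * k).factorial * ((k : ℝ) + 1 / 2) ^ a ≤
      (1 + 2 * a) * 4 ^ k * (k.factorial * Gamma ((k : ℝ) + 1 / 2 + a)) := by
  have hs : (0 : ℝ) < k + 1 / 2 := by positivity
  have hΓ : 0 < Gamma ((k : ℝ) + 1 / 2 + a) := Gamma_pos_of_pos (by positivity)
  have hdup : √π * (2 * k).factorial = 4 ^ k * (k.factorial * Gamma ((k : ℝ) + 1 / 2)) := by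
    rw [factorial_mul_Gamma_add_half]; field_simp
  have hdiv : a / (k + 1 / 2) ≤ a / (1 / 2) := by gcongr; simp
  have hratio : Gamma ((k : ℝ) + 1 / 2) * ((k : ℝ) + 1 / 2) ^ a ≤
      (1 + 2 * a) * Gamma ((k : ℝ) + 1 / 2 + a) :=
    (Gamma_mul_rpow_le hs ha).trans (mul_le_mul_of_nonneg_right (by linarith) hΓ.le)
  calc √π * (2 * k).factorial * ((k : ℝ) + 1 / 2) ^ a
      = 4 ^ k * k.factorial * (Gamma ((k : ℝ) + 1 / 2) * ((k : ℝ) + 1 / 2) ^ a) := by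
        rw [hdup]; ring
    _ ≤ 4 ^ k * k.factorial * ((1 + 2 * a) * Gamma ((k : ℝ) + 1 / 2 + a)) := by gcongr
    _ = _ := by ring

end Gamma

section ExponentialSeries

lemma sum_pow_div_factorial_le_exp {z : ℝ} (hz : 0 ≤ z) (s : Finset ℕ) :
    ∑ m ∈ s, z ^ m / (m.factorial : ℝ) ≤ exp z := by
  rw [exp_eq_exp_ℝ, NormedSpace.exp_eq_tsum_div]
  exact (summable_pow_div_factorial z).sum_le_tsum s fun m _ => by positivity

lemma factorial_add_le (m n : ℕ) :
    (m + n).factorial ≤ m.factorial * ((n + 1) * (m + 1)) ^ n := by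
  rw [← Nat.factorial_mul_ascFactorial]
  gcongr
  exact (Nat.ascFactorial_le_pow_add m n).trans (Nat.pow_le_pow_left (by nlinarith) n)

lemma div_succ_pow_mul_pow_div_factorial_le {z : ℝ} (hz : 0 ≤ z) (m n : ℕ) :
    (z / (m + 1)) ^ n * (z ^ m / (m.factorial : ℝ)) ≤
      (n + 1) ^ n * (z ^ (m + n) / ((m + n).factorial : ℝ)) := by
  have hfac : ((m + n).factorial : ℝ) ≤ m.factorial * ((n + 1) * (m + 1)) ^ n := by
    exact_mod_cast factorial_add_le m n
  calc (z / (m + 1)) ^ n * (z ^ m / (m.factorial : ℝ))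
      = (n + 1) ^ n * (z ^ (m + n) / (m.factorial * ((n + 1) * (m + 1)) ^ n)) := by
        rw [div_pow, mul_pow, pow_add]; field_simp
    _ ≤ (n + 1) ^ n * (z ^ (m + n) / ((m + n).factorial : ℝ)) := by gcongr

lemma rpow_le_one_add_pow {r a : ℝ} {n : ℕ} (hr : 0 ≤ r) (ha : 0 ≤ a) (hn : a ≤ n) :
    r ^ a ≤ 1 + r ^ n := by
  rcases le_total r 1 with h | h
  · exact (rpow_le_one hr h ha).trans (le_add_of_nonneg_right (by positivity))
  · rw [← rpow_natCast]
    exact (rpow_le_rpow_of_exponent_le h hn).trans (le_add_of_nonneg_left zero_le_one)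

lemma div_succ_rpow_le_rpow_mul {z μ : ℝ} (hz : 0 < z) (hμ : 0 ≤ μ) (a : ℝ) (m : ℕ) :
    (z / (m + 1)) ^ a ≤ z ^ μ * (z / (m + 1)) ^ (a - μ) := by
  calc (z / (m + 1)) ^ a = (z / (m + 1)) ^ μ * (z / (m + 1)) ^ (a - μ) := by
        rw [← rpow_add (by positivity), add_sub_cancel]
    _ ≤ z ^ μ * (z / (m + 1)) ^ (a - μ) := by
        gcongr
        exact div_le_self hz.le (by simp)

lemma exists_sum_div_succ_rpow_mul_pow_div_factorial_le {a : ℝ} (ha : 0 ≤ a) :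
    ∃ C : ℝ, 0 < C ∧ ∀ z : ℝ, 0 ≤ z → ∀ s : Finset ℕ,
      ∑ m ∈ s, (z / (m + 1)) ^ a * (z ^ m / (m.factorial : ℝ)) ≤ C * exp z := by
  obtain ⟨n, hn⟩ := exists_nat_ge a
  refine ⟨1 + (n + 1) ^ n, by positivity, fun z hz s => ?_⟩
  have hterm (m : ℕ) : (z / (m + 1)) ^ a * (z ^ m / (m.factorial : ℝ)) ≤
      z ^ m / (m.factorial : ℝ) + (n + 1) ^ n * (z ^ (m + n) / ((m + n).factorial : ℝ)) := by
    calc (z / (m + 1)) ^ a * (z ^ m / (m.factorial : ℝ))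
        ≤ (1 + (z / (m + 1)) ^ n) * (z ^ m / (m.factorial : ℝ)) := by
          gcongr
          exact rpow_le_one_add_pow (by positivity) ha hn
      _ ≤ _ := by
          rw [one_add_mul]
          exact add_le_add_right (div_succ_pow_mul_pow_div_factorial_le hz m n) _
  have hshift : ∑ m ∈ s, z ^ (m + n) / ((m + n).factorial : ℝ) ≤ exp z := by
    simpa using sum_pow_div_factorial_le_exp hz (s.map (addRightEmbedding n))
  calc _ ≤ ∑ m ∈ s, z ^ m / (m.factorial : ℝ) +
        (n + 1) ^ n * ∑ m ∈ s, z ^ (m + n) / ((m + n).factorial : ℝ) := by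
        rw [Finset.mul_sum, ← Finset.sum_add_distrib]
        exact Finset.sum_le_sum fun m _ => hterm m
    _ ≤ exp z + (n + 1) ^ n * exp z := by
        gcongr
        exact sum_pow_div_factorial_le_exp hz s
    _ = (1 + (n + 1) ^ n) * exp z := by ring

end ExponentialSeries

section BesselI

lemma besselI_term_nonneg {ν z : ℝ} (hν : -1 < ν) (hz : 0 ≤ z) (k : ℕ) :
    0 ≤ (z / 2) ^ (2 * (k : ℝ) + ν) / ((k.factorial : ℝ) * Gamma ((k : ℝ) + ν + 1)) := by
  have : 0 < Gamma ((k : ℝ) + ν + 1) :=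
    Gamma_pos_of_pos (by linarith [(Nat.cast_nonneg k : (0 : ℝ) ≤ k)])
  positivity

lemma besselI_nonneg {ν z : ℝ} (hν : -1 < ν) (hz : 0 ≤ z) : 0 ≤ besselI ν z :=
  tsum_nonneg (besselI_term_nonneg hν hz)

lemma sqrt_mul_half_rpow {z : ℝ} (hz : 0 < z) (ν : ℝ) (k : ℕ) :
    √z * (z / 2) ^ (2 * (k : ℝ) + ν) =
      √2 * (z / 2) ^ (ν + 1 / 2) * (z ^ (2 * k) / 4 ^ k) := by
  have hexp : 2 * (k : ℝ) + ν + 1 / 2 = (ν + 1 / 2) + (2 * k : ℕ) := by push_cast; ring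
  calc √z * (z / 2) ^ (2 * (k : ℝ) + ν)
      = √2 * ((z / 2) ^ (2 * (k : ℝ) + ν) * (z / 2) ^ (1 / 2 : ℝ)) := by
        rw [← sqrt_eq_rpow, sqrt_div hz.le]; field_simp
    _ = √2 * ((z / 2) ^ (ν + 1 / 2) * (z / 2) ^ (2 * k)) := by
        rw [← rpow_add (by positivity), hexp, rpow_add (by positivity), rpow_natCast]
    _ = √2 * (z / 2) ^ (ν + 1 / 2) * (z ^ (2 * k) / 4 ^ k) := by
        rw [div_pow z, pow_mul 2]; norm_num; ring

lemma sqrt_mul_besselI_term_le {ν z : ℝ} (hν : -(1 / 2) ≤ ν) (hz : 0 < z) (k : ℕ) :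
    √z * ((z / 2) ^ (2 * (k : ℝ) + ν) / ((k.factorial : ℝ) * Gamma ((k : ℝ) + ν + 1))) ≤
      √2 * (2 * ν + 2) / √π * ((z / ((2 * k : ℕ) + 1)) ^ (ν + 1 / 2) *
        (z ^ (2 * k) / ((2 * k).factorial : ℝ))) := by
  set a := ν + 1 / 2 with ha
  have hs : (0 : ℝ) < k + 1 / 2 := by positivity
  have hΓ : 0 < Gamma ((k : ℝ) + ν + 1) := Gamma_pos_of_pos (by linarith)
  have hfac : √π * (2 * k).factorial * ((k : ℝ) + 1 / 2) ^ a ≤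
      (2 * ν + 2) * 4 ^ k * (k.factorial * Gamma ((k : ℝ) + ν + 1)) := by
    have h := factorial_two_mul_mul_rpow_le (show 0 ≤ a by linarith) k
    rwa [show 1 + 2 * a = 2 * ν + 2 by rw [ha]; ring,
      show (k : ℝ) + 1 / 2 + a = k + ν + 1 by rw [ha]; ring] at h
  have hbase : z / ((2 * k : ℕ) + 1) = z / 2 / (k + 1 / 2) := by push_cast; field_simp
  rw [hbase, div_rpow (by positivity) hs.le, mul_div_assoc', sqrt_mul_half_rpow hz,
    div_le_iff₀ (by positivity)]
  set c := √2 * (z / 2) ^ a * z ^ (2 * k) /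
    (√π * (2 * k).factorial * ((k : ℝ) + 1 / 2) ^ a * 4 ^ k) with hc
  calc √2 * (z / 2) ^ a * (z ^ (2 * k) / 4 ^ k)
      = c * (√π * (2 * k).factorial * ((k : ℝ) + 1 / 2) ^ a) := by rw [hc]; field_simp
    _ ≤ c * ((2 * ν + 2) * 4 ^ k * (k.factorial * Gamma ((k : ℝ) + ν + 1))) := by gcongr
    _ = _ := by rw [hc]; field_simp

lemma exists_sqrt_mul_besselI_mul_exp_neg_le {ν μ : ℝ} (hμ : 0 ≤ μ) (hμν : μ ≤ ν + 1 / 2) :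
    ∃ C : ℝ, 0 < C ∧ ∀ z : ℝ, 0 < z → √z * besselI ν z * exp (-z) ≤ C * z ^ μ := by
  obtain ⟨B, hB, hsum⟩ := exists_sum_div_succ_rpow_mul_pow_div_factorial_le (sub_nonneg.2 hμν)
  have hν : 0 < 2 * ν + 2 := by linarith
  set A := √2 * (2 * ν + 2) / √π
  refine ⟨A * B, by positivity, fun z hz => ?_⟩
  have hterm (k : ℕ) :
      √z * ((z / 2) ^ (2 * (k : ℝ) + ν) / ((k.factorial : ℝ) * Gamma ((k : ℝ) + ν + 1))) ≤
        A * z ^ μ * ((z / ((2 * k : ℕ) + 1)) ^ (ν + 1 / 2 - μ) *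
          (z ^ (2 * k) / ((2 * k).factorial : ℝ))) := by
    refine (sqrt_mul_besselI_term_le (by linarith) hz k).trans ?_
    rw [mul_assoc A, ← mul_assoc (z ^ μ)]
    gcongr
    exact div_succ_rpow_le_rpow_mul hz hμ _ _
  have hseries : √z * besselI ν z ≤ A * z ^ μ * (B * exp z) := by
    rw [besselI, ← tsum_mul_left]
    refine Real.tsum_le_of_sum_le
      (fun k => mul_nonneg (sqrt_nonneg z) (besselI_term_nonneg (by linarith) hz.le k)) fun s => ?_
    refine (Finset.sum_le_sum fun k _ => hterm k).trans ?_
    rw [← Finset.mul_sum]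
    gcongr
    simpa using hsum z hz.le (s.map ⟨(2 * ·), mul_right_injective₀ two_ne_zero⟩)
  calc √z * besselI ν z * exp (-z) ≤ A * z ^ μ * (B * exp z) * exp (-z) := by gcongr
    _ = A * B * z ^ μ * (exp z * exp (-z)) := by ring
    _ = A * B * z ^ μ := by rw [← exp_add, add_neg_cancel, exp_zero, mul_one]

end BesselI

section HeatKernel

lemma besselHeatKernel_nonneg {lam t x y : ℝ} (hlam : -(1 / 2) < lam) (ht : 0 ≤ t) (hx : 0 ≤ x)
    (hy : 0 ≤ y) : 0 ≤ besselHeatKernel lam t x y := by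
  have := besselI_nonneg (ν := lam - 1 / 2) (by linarith)
    (show 0 ≤ x * y / (2 * t) by positivity)
  unfold besselHeatKernel
  positivity

lemma besselHeatKernel_eq {t x y : ℝ} (lam : ℝ) (ht : 0 < t) (hxy : 0 ≤ x * y) :
    besselHeatKernel lam t x y =
      √(x * y / (2 * t)) * besselI (lam - 1 / 2) (x * y / (2 * t)) * exp (-(x * y / (2 * t))) /
        √(2 * t) * exp (-(x - y) ^ 2 / (4 * t)) := by
  have hsqrt : √(x * y) / (2 * t) = √(x * y / (2 * t)) / √(2 * t) := by
    rw [sqrt_div hxy, div_div, mul_self_sqrt (by positivity)]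
  have hexp : exp (-(x ^ 2 + y ^ 2) / (4 * t)) =
      exp (-(x * y / (2 * t))) * exp (-(x - y) ^ 2 / (4 * t)) := by
    rw [← exp_add]
    congr 1
    field_simp
    ring
  rw [besselHeatKernel, hsqrt, hexp]
  ring

lemma exists_besselHeatKernel_le {lam μ : ℝ} (hμ : 0 ≤ μ) (hμlam : μ ≤ lam) :
    ∃ C : ℝ, 0 < C ∧ ∀ x y t : ℝ, 0 < x → 0 < y → 0 < t →
      besselHeatKernel lam t x y ≤ C * ((x * y / t) ^ μ / √t * exp (-(x - y) ^ 2 / (4 * t))) := by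
  obtain ⟨C, hC, hbessel⟩ :=
    exists_sqrt_mul_besselI_mul_exp_neg_le (ν := lam - 1 / 2) hμ (by linarith)
  refine ⟨C, hC, fun x y t hx hy ht => ?_⟩
  have ht2 : t ≤ 2 * t := by linarith
  rw [besselHeatKernel_eq lam ht (by positivity)]
  calc _ ≤ C * (x * y / (2 * t)) ^ μ / √(2 * t) * exp (-(x - y) ^ 2 / (4 * t)) := by
        gcongr ?_ / _ * _
        exact hbessel (x * y / (2 * t)) (by positivity)
    _ ≤ C * (x * y / t) ^ μ / √t * exp (-(x - y) ^ 2 / (4 * t)) := by gcongr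
    _ = _ := by ring

end HeatKernel

section InverseGamma

variable {p a : ℝ}

lemma gamma_integrand_comp_rpow_neg_one {s : ℝ} (hs : 0 < s) :
    s ^ ((-1 : ℝ) - 1) • ((s ^ (-1 : ℝ)) ^ (p - 1) * exp (-(a * s ^ (-1 : ℝ)))) =
      s ^ (-p - 1) * exp (-(a / s)) := by
  rw [smul_eq_mul, ← mul_assoc, ← rpow_mul hs.le, ← rpow_add hs, rpow_neg_one, div_eq_mul_inv]
  ring_nf

lemma integrableOn_rpow_mul_exp_neg_div_Ioi (hp : 0 < p) (ha : 0 < a) :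
    IntegrableOn (fun s : ℝ => s ^ (-p - 1) * exp (-(a / s))) (Ioi 0) := by
  have hgamma : IntegrableOn (fun u : ℝ => u ^ (p - 1) * exp (-(a * u))) (Ioi 0) := by
    simpa using integrableOn_rpow_mul_exp_neg_mul_rpow (s := p - 1) (by linarith) one_pos ha
  exact ((integrableOn_Ioi_comp_rpow_iff' _ (by norm_num : (-1 : ℝ) ≠ 0)).2 hgamma).congr_fun
    (fun s hs => gamma_integrand_comp_rpow_neg_one hs) measurableSet_Ioi

lemma integral_rpow_mul_exp_neg_div_Ioi (hp : 0 < p) (ha : 0 < a) :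
    ∫ s in Ioi (0 : ℝ), s ^ (-p - 1) * exp (-(a / s)) = (1 / a) ^ p * Gamma p := by
  rw [← integral_rpow_mul_exp_neg_mul_Ioi hp ha,
    ← integral_comp_rpow_Ioi (fun u : ℝ => u ^ (p - 1) * exp (-(a * u)))
      (by norm_num : (-1 : ℝ) ≠ 0)]
  refine setIntegral_congr_fun measurableSet_Ioi fun s hs => ?_
  simpa using (gamma_integrand_comp_rpow_neg_one hs).symm

end InverseGamma

section PoissonKernel

lemma subordination_integrand_eq {x y s : ℝ} (t μ : ℝ) (hxy : 0 ≤ x * y) (hs : 0 < s) :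
    s ^ (-(3 : ℝ) / 2) * exp (-t ^ 2 / (4 * s)) *
        ((x * y / s) ^ μ / √s * exp (-(x - y) ^ 2 / (4 * s))) =
      (x * y) ^ μ * (s ^ (-(μ + 1) - 1) * exp (-((t ^ 2 + (x - y) ^ 2) / 4 / s))) := by
  have hpow : s ^ (-(μ + 1) - 1) = s ^ (-(3 : ℝ) / 2) / s ^ μ / √s := by
    rw [sqrt_eq_rpow, ← rpow_sub hs, ← rpow_sub hs]; ring_nf
  have hexp : exp (-((t ^ 2 + (x - y) ^ 2) / 4 / s)) =
      exp (-t ^ 2 / (4 * s)) * exp (-(x - y) ^ 2 / (4 * s)) := by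
    rw [← exp_add]
    congr 1
    field_simp
    ring
  rw [hpow, hexp, div_rpow hxy hs.le]
  ring

lemma exists_subordination_integral_le {lam μ : ℝ} (hμ : 0 ≤ μ) (hμlam : μ ≤ lam) :
    ∃ C : ℝ, 0 < C ∧ ∀ x y t : ℝ, 0 < x → 0 < y → 0 < t →
      ∫ s in Ioi (0 : ℝ), s ^ (-(3 : ℝ) / 2) * exp (-t ^ 2 / (4 * s)) *
          besselHeatKernel lam s x y ≤
        C * ((x * y) ^ μ * (1 / ((t ^ 2 + (x - y) ^ 2) / 4)) ^ (μ + 1)) := by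
  obtain ⟨K, hK, hheat⟩ := exists_besselHeatKernel_le hμ hμlam
  refine ⟨K * Gamma (μ + 1), by positivity, fun x y t hx hy ht => ?_⟩
  set a := (t ^ 2 + (x - y) ^ 2) / 4
  have ha : 0 < a := by positivity
  have hle : ∫ s in Ioi (0 : ℝ), s ^ (-(3 : ℝ) / 2) * exp (-t ^ 2 / (4 * s)) *
        besselHeatKernel lam s x y ≤
      ∫ s in Ioi (0 : ℝ), K * (x * y) ^ μ * (s ^ (-(μ + 1) - 1) * exp (-(a / s))) := by
    refine integral_mono_of_nonneg ?_
      ((integrableOn_rpow_mul_exp_neg_div_Ioi (by positivity) ha).const_mul _) ?_ <;>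
    filter_upwards [ae_restrict_mem measurableSet_Ioi] with s (hs : 0 < s)
    · have := besselHeatKernel_nonneg (lam := lam) (by linarith) hs.le hx.le hy.le
      simp only [Pi.zero_apply]
      positivity
    · rw [mul_assoc K, ← subordination_integrand_eq t μ (by positivity) hs, mul_left_comm]
      gcongr
      exact hheat x y s hx hy hs
  refine hle.trans_eq ?_
  rw [integral_const_mul, integral_rpow_mul_exp_neg_div_Ioi (by positivity) ha]
  ring

lemma one_div_sq_add_sq_div_four_le {t u : ℝ} (ht : 0 < t) :
    1 / ((t ^ 2 + u ^ 2) / 4) ≤ 8 / (t + |u|) ^ 2 := by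
  rw [div_le_div_iff₀ (by positivity) (by positivity)]
  nlinarith [sq_abs u, sq_nonneg (t - |u|)]

lemma exists_besselPoissonKernel_le {lam μ : ℝ} (hμ : 0 ≤ μ) (hμlam : μ ≤ lam) :
    ∃ C : ℝ, 0 < C ∧ ∀ x y t : ℝ, 0 < x → 0 < y → 0 < t →
      besselPoissonKernel lam t x y ≤
        C * (t / (t + |x - y|) ^ 2 * (x * y / (t + |x - y|) ^ 2) ^ μ) := by
  obtain ⟨K, hK, hintegral⟩ := exists_subordination_integral_le hμ hμlam
  refine ⟨K / (2 * √π) * 8 ^ (μ + 1), by positivity, fun x y t hx hy ht => ?_⟩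
  set D := t + |x - y|
  have hpow : (1 / ((t ^ 2 + (x - y) ^ 2) / 4)) ^ (μ + 1) ≤
      8 ^ (μ + 1) * ((1 / D ^ 2) ^ μ * (1 / D ^ 2)) := by
    rw [← rpow_add_one (by positivity), ← mul_rpow (by norm_num) (by positivity), mul_one_div]
    exact rpow_le_rpow (by positivity) (one_div_sq_add_sq_div_four_le ht) (by positivity)
  calc besselPoissonKernel lam t x y
      ≤ t / (2 * √π) * (K * ((x * y) ^ μ *
          (8 ^ (μ + 1) * ((1 / D ^ 2) ^ μ * (1 / D ^ 2))))) := by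
        unfold besselPoissonKernel
        gcongr
        exact (hintegral x y t hx hy ht).trans (by gcongr)
    _ = _ := by
        rw [div_eq_mul_one_div (x * y), mul_rpow (x := x * y) (by positivity) (by positivity)]
        ring

lemma exists_besselPoissonKernel_le_min {lam : ℝ} (hlam : 0 ≤ lam) :
    ∃ C : ℝ, 0 < C ∧ ∀ x y t : ℝ, 0 < x → 0 < y → 0 < t →
      besselPoissonKernel lam t x y ≤
        C * (t / (t + |x - y|) ^ 2 * min (x * y / (t + |x - y|) ^ 2) 1 ^ lam) := by
  obtain ⟨C₀, hC₀, hzero⟩ := exists_besselPoissonKernel_le le_rfl hlam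
  obtain ⟨C₁, -, hfull⟩ := exists_besselPoissonKernel_le hlam le_rfl
  refine ⟨max C₀ C₁, by positivity, fun x y t hx hy ht => ?_⟩
  rcases le_total (x * y / (t + |x - y|) ^ 2) 1 with h | h
  · rw [min_eq_left h]
    exact (hfull x y t hx hy ht).trans (by gcongr; exact le_max_right C₀ C₁)
  · rw [min_eq_right h, one_rpow, ← rpow_zero (x * y / (t + |x - y|) ^ 2)]
    exact (hzero x y t hx hy ht).trans (by gcongr; exact le_max_left C₀ C₁)

lemma min_mul_div_sq_le {x y D : ℝ} (hx : 0 ≤ x) (hy : 0 ≤ y) (hD : 0 < D) (hxy : |x - y| ≤ D) :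
    min (x * y / D ^ 2) 1 ≤ 2 * min (min x y / D) 1 := by
  rcases le_total 1 (min x y / D) with h | h
  · rw [min_eq_right h]
    linarith [min_le_right (x * y / D ^ 2) 1]
  have hmin : min x y ≤ D := (div_le_one hD).1 h
  have hmax : max x y ≤ 2 * D := by
    linarith [max_sub_min_eq_abs x y, abs_sub_comm x y]
  rw [min_eq_left h]
  calc min (x * y / D ^ 2) 1 ≤ x * y / D ^ 2 := min_le_left _ _
    _ = min x y * max x y / D ^ 2 := by rw [min_mul_max]
    _ ≤ min x y * (2 * D) / D ^ 2 := by gcongr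
    _ = 2 * (min x y / D) := by field_simp

end PoissonKernel

/-- Size estimates for the Bessel–Poisson kernel. -/
theorem poisson_kernel_bounds (lam : ℝ) (hlam : 0 < lam) :
    ∃ C : ℝ, 0 < C ∧ ∀ x y t : ℝ, 0 < x → 0 < y → 0 < t →
      besselPoissonKernel lam t x y ≤
          C * (t / (t + |x - y|) ^ 2 * (min (min x y / (t + |x - y|)) 1) ^ lam) ∧
      besselPoissonKernel lam t x y ≤
          C * (t * (x * y) ^ lam / (t + |x - y|) ^ (2 * (lam + 1))) := by
  obtain ⟨C, hC, hP⟩ := exists_besselPoissonKernel_le_min hlam.le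
  have h2 : (1 : ℝ) ≤ 2 ^ lam := one_le_rpow one_le_two hlam.le
  refine ⟨C * 2 ^ lam, by positivity, fun x y t hx hy ht => ?_⟩
  have hxyt := hP x y t hx hy ht
  set D := t + |x - y|
  have hD : 0 < D := by positivity
  refine ⟨hxyt.trans ?_, hxyt.trans ?_⟩
  · have hmin := min_mul_div_sq_le hx.le hy.le hD (le_add_of_nonneg_left ht.le)
    calc _ ≤ C * (t / D ^ 2 * (2 * min (min x y / D) 1) ^ lam) := by gcongr
      _ = _ := by rw [mul_rpow zero_le_two (by positivity)]; ring
  · calc _ ≤ C * 2 ^ lam * (t / D ^ 2 * (x * y / D ^ 2) ^ lam) := by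
          gcongr
          · exact le_mul_of_one_le_right hC.le h2
          · exact min_le_left _ _
      _ = _ := by
          rw [div_rpow (by positivity) (by positivity), rpow_mul hD.le, rpow_two,
            rpow_add_one (by positivity)]
          field_simp
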